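/- arXiv:1312.1382 — 6 statements merged into one kernel-verified Lean document; each statement's English description precedes it below -/
import Mathlib

section
/- Let G = (V,E) be a finite simple undirected graph on n ≥ 2 vertices with at least one edge, let β > 1 be a real number, and set γ = β·α(G). Suppose an orientation D of G satisfies the following invariant: for every vertex w, the number of valid outgoing edges of w is at least min{d⁺(w), γ}. Then the maximum out-degree satisfies Δ ≤ β·α(G) + ⌈log_β n⌉. -/
open Finset

structure GraphOrientation {V : Type*} [Fintype V] [DecidableEq V] (G : SimpleGraph V) where
  dir : V → V → Bool
  dir_iff : ∀ u v, G.Adj u v ↔ (dir u v ∨ dir v u)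
  asymm : ∀ u v, dir u v → ¬ dir v u

namespace GraphOrientation
variable {V : Type*} [Fintype V] [DecidableEq V] {G : SimpleGraph V}

/-- The out-degree of `u` under orientation `D`. -/
def outDeg (D : GraphOrientation G) (u : V) : ℕ :=
  (Finset.univ.filter fun v => D.dir u v).card

/-- The maximum out-degree `Δ` of the orientation. -/
def maxOutDeg (D : GraphOrientation G) : ℕ :=
  Finset.univ.sup D.outDeg

/-- The edge oriented `u → v` is valid: `d⁺(u) ≤ d⁺(v) + 1`. -/
def Valid (D : GraphOrientation G) (u v : V) : Prop :=
  D.dir u v ∧ D.outDeg u ≤ D.outDeg v + 1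

instance (D : GraphOrientation G) (u : V) : DecidablePred (D.Valid u) := by
  unfold Valid; infer_instance

end GraphOrientation

/-- The set `E(U)` of edges of `G` with both endpoints in `U`. -/
def edgesIn {V : Type*} [Fintype V] [DecidableEq V] (G : SimpleGraph V)
    [DecidableRel G.Adj] (U : Finset V) : Finset (Sym2 V) :=
  G.edgeFinset ∩ U.sym2

/-- The arboricity `α(G) = max_{U ⊆ V, |U| ≥ 2} ⌈|E(U)|/(|U|-1)⌉`. -/
def arboricity {V : Type*} [Fintype V] [DecidableEq V] (G : SimpleGraph V)
    [DecidableRel G.Adj] : ℕ :=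
  Finset.univ.sup fun U : Finset V =>
    if 2 ≤ U.card then ⌈((edgesIn G U).card : ℚ) / ((U.card : ℚ) - 1)⌉₊ else 0

/-- `|E(U)| ≤ α(G) (|U| - 1)` for every nonempty `U`. -/
lemma card_edgesIn_le {V : Type*} [Fintype V] [DecidableEq V] (G : SimpleGraph V)
    [DecidableRel G.Adj] {U : Finset V} (hU : U.Nonempty) :
    ((edgesIn G U).card : ℝ) ≤ arboricity G * ((U.card : ℝ) - 1) := by
  by_cases h2 : 2 ≤ U.card
  · have hle : ⌈((edgesIn G U).card : ℚ) / ((U.card : ℚ) - 1)⌉₊ ≤ arboricity G := by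
      have h := Finset.le_sup (f := fun U : Finset V =>
        if 2 ≤ U.card then ⌈((edgesIn G U).card : ℚ) / ((U.card : ℚ) - 1)⌉₊ else 0)
        (Finset.mem_univ U)
      rwa [if_pos h2] at h
    have hpos : (0 : ℚ) < (U.card : ℚ) - 1 := by
      have : (2 : ℚ) ≤ U.card := by exact_mod_cast h2
      linarith
    have h := (div_le_iff₀ hpos).1 (Nat.ceil_le.1 hle)
    exact_mod_cast h
  · have h1 : U.card = 1 := by have := hU.card_pos; omega
    obtain ⟨a, rfl⟩ := Finset.card_eq_one.1 h1
    have : edgesIn G {a} = ∅ := by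
      ext e
      induction e using Sym2.ind with
      | _ x y =>
        simp only [edgesIn, Finset.mem_inter, SimpleGraph.mem_edgeFinset,
          SimpleGraph.mem_edgeSet, Finset.mk_mem_sym2_iff, Finset.mem_singleton,
          Finset.notMem_empty, iff_false]
        rintro ⟨h, rfl, rfl⟩
        exact G.loopless.irrefl _ h
    simp [this]

lemma arboricity_pos {V : Type*} [Fintype V] [DecidableEq V] (G : SimpleGraph V)
    [DecidableRel G.Adj] (hE : G.edgeSet.Nonempty) : 0 < arboricity G := by
  obtain ⟨e, he⟩ := hE
  have hmem : e ∈ edgesIn G Finset.univ := by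
    simp [edgesIn, he]
  have hcard : (0 : ℝ) < (edgesIn G Finset.univ).card := by
    exact_mod_cast Finset.card_pos.2 ⟨e, hmem⟩
  have : Nonempty V := ⟨e.out.1⟩
  by_contra h
  have h0 : arboricity G = 0 := by omega
  have := card_edgesIn_le G (Finset.univ_nonempty (α := V))
  rw [h0] at this
  norm_num at this
  simp [this] at hcard

namespace GraphOrientation
variable {V : Type*} [Fintype V] [DecidableEq V] {G : SimpleGraph V}

/-- The vertices of out-degree at least `t`. -/
def level (D : GraphOrientation G) (t : ℕ) : Finset V :=
  Finset.univ.filter fun v => t ≤ D.outDeg v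

@[simp]
lemma mem_level {D : GraphOrientation G} {t : ℕ} {v : V} :
    v ∈ D.level t ↔ t ≤ D.outDeg v := by
  simp [level]

/-- Valid edges leaving `level t` are distinct edges inside `level (t - 1)`. -/
lemma sum_card_valid_le [DecidableRel G.Adj] (D : GraphOrientation G) (t : ℕ) :
    ∑ u ∈ D.level t, (Finset.univ.filter fun v => D.Valid u v).card ≤
      (edgesIn G (D.level (t - 1))).card := by
  rw [← Finset.card_sigma]
  refine Finset.card_le_card_of_injOn (fun p => s(p.1, p.2)) ?_ ?_
  · rintro ⟨u, v⟩ h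
    simp only [Finset.mem_coe, Finset.mem_sigma, mem_level, Finset.mem_filter,
      Finset.mem_univ, true_and] at h
    obtain ⟨hu, hd, hv⟩ := h
    simp only [Finset.mem_coe, edgesIn, Finset.mem_inter, SimpleGraph.mem_edgeFinset,
      SimpleGraph.mem_edgeSet, Finset.mk_mem_sym2_iff, mem_level]
    exact ⟨(D.dir_iff u v).2 (Or.inl hd), by omega, by omega⟩
  · rintro ⟨u, v⟩ h ⟨x, y⟩ hxy heq
    simp only [Finset.mem_coe, Finset.mem_sigma, Finset.mem_filter,
      Finset.mem_univ, true_and] at h hxy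
    rcases Sym2.eq_iff.1 heq with ⟨h1, h2⟩ | ⟨h1, h2⟩
    · dsimp only at h1 h2
      subst h1 h2
      rfl
    · dsimp only at h1 h2
      subst h1 h2
      exact absurd hxy.2.1 (D.asymm _ _ h.2.1)

lemma mul_card_level_le [DecidableRel G.Adj] (D : GraphOrientation G)
    (hE : G.edgeSet.Nonempty) {β : ℝ}
    (hinv : ∀ w : V,
      min (D.outDeg w : ℝ) (β * arboricity G) ≤
        ((Finset.univ.filter fun v => D.Valid w v).card : ℝ))
    {t : ℕ} (ht : β * arboricity G ≤ t) (hne : (D.level t).Nonempty) :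
    β * (D.level t).card ≤ (D.level (t - 1)).card := by
  have hα : (0 : ℝ) < arboricity G := by exact_mod_cast arboricity_pos G hE
  have hsum : (D.level t).card * (β * arboricity G) ≤
      ∑ u ∈ D.level t, ((Finset.univ.filter fun v => D.Valid u v).card : ℝ) := by
    rw [← nsmul_eq_mul]
    refine Finset.card_nsmul_le_sum _ _ _ fun u hu => ?_
    have hu' : (t : ℝ) ≤ D.outDeg u := by exact_mod_cast mem_level.1 hu
    simpa [min_eq_right (ht.trans hu')] using hinv u
  have hedges : (∑ u ∈ D.level t, ((Finset.univ.filter fun v => D.Valid u v).card : ℝ)) ≤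
      (edgesIn G (D.level (t - 1))).card := by
    exact_mod_cast D.sum_card_valid_le t
  have hne' : (D.level (t - 1)).Nonempty :=
    hne.mono fun v hv => mem_level.2 ((Nat.sub_le t 1).trans (mem_level.1 hv))
  have harb := card_edgesIn_le G hne'
  refine le_of_mul_le_mul_left ?_ hα
  linarith

end GraphOrientation

/-- If for every vertex `w` at least `min{d⁺(w), γ}` (with `γ = β·α(G)`)
of the outgoing edges of `w` are valid, then `Δ ≤ β·α(G) + ⌈log_β n⌉`. -/
theorem max_outDeg_le_of_invariant {V : Type*} [Fintype V] [DecidableEq V]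
    (G : SimpleGraph V) [DecidableRel G.Adj]
    (hn : 2 ≤ Fintype.card V) (hE : G.edgeSet.Nonempty)
    (β : ℝ) (hβ : 1 < β) (D : GraphOrientation G)
    (hinv : ∀ w : V,
      min (D.outDeg w : ℝ) (β * arboricity G) ≤
        ((Finset.univ.filter fun v => D.Valid w v).card : ℝ)) :
    (D.maxOutDeg : ℝ) ≤ β * arboricity G + ⌈Real.logb β (Fintype.card V)⌉ := by
  obtain ⟨k, hk⟩ : ∃ k : ℕ, (k : ℤ) = ⌈Real.logb β (Fintype.card V)⌉ :=
    ⟨_, Int.toNat_of_nonneg (Int.ceil_nonneg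
      (Real.logb_nonneg hβ (by exact_mod_cast (by omega : 1 ≤ Fintype.card V))))⟩
  have hcard : (Fintype.card V : ℝ) ≤ β ^ k := by
    have hlog : Real.logb β (Fintype.card V) ≤ k := by
      have := Int.le_ceil (Real.logb β (Fintype.card V))
      rw [← hk] at this
      exact_mod_cast this
    rw [Real.logb_le_iff_le_rpow hβ (by exact_mod_cast (by omega : 0 < Fintype.card V))] at hlog
    exact_mod_cast hlog
  rw [← hk]
  by_contra! hlt
  push_cast at hlt
  have grow : ∀ i ≤ k + 1, β ^ i ≤ ((D.level (D.maxOutDeg - i)).card : ℝ) := by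
    intro i
    induction i with
    | zero =>
      intro _
      have : Nonempty V := Fintype.card_pos_iff.1 (by omega)
      obtain ⟨v, -, hv⟩ := Finset.exists_mem_eq_sup Finset.univ Finset.univ_nonempty D.outDeg
      have hpos : 0 < (D.level (D.maxOutDeg - 0)).card :=
        Finset.card_pos.2 ⟨v, GraphOrientation.mem_level.2 hv.le⟩
      rw [pow_zero]
      exact_mod_cast hpos
    | succ i ih =>
      intro hi
      have hle := ih (by omega)
      have hpos : (0 : ℝ) < (D.level (D.maxOutDeg - i)).card :=
        (pow_pos (zero_lt_one.trans hβ) i).trans_le hle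
      have hne : (D.level (D.maxOutDeg - i)).Nonempty :=
        Finset.card_pos.1 (by exact_mod_cast hpos)
      have ht : β * arboricity G ≤ ((D.maxOutDeg - i : ℕ) : ℝ) := by
        have hik : (i : ℝ) ≤ k := by exact_mod_cast (by omega : i ≤ k)
        have hsub : (D.maxOutDeg : ℝ) ≤ ((D.maxOutDeg - i : ℕ) : ℝ) + i := by
          exact_mod_cast (by omega : D.maxOutDeg ≤ D.maxOutDeg - i + i)
        linarith
      calc β ^ (i + 1) = β * β ^ i := pow_succ' β i
        _ ≤ β * (D.level (D.maxOutDeg - i)).card := by gcongr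
        _ ≤ (D.level (D.maxOutDeg - (i + 1))).card := D.mul_card_level_le hE hinv ht hne
  have hlast := grow (k + 1) le_rfl
  have huniv : ((D.level (D.maxOutDeg - (k + 1))).card : ℝ) ≤ Fintype.card V := by
    exact_mod_cast Finset.card_le_univ _
  have hstrict : β ^ k < β ^ (k + 1) := pow_lt_pow_right₀ hβ k.lt_succ_self
  linarith
end

section
/- Let G = (V,E) be a finite simple undirected graph with at least one edge. Then there exists an orientation of G whose maximum out-degree Δ satisfies Δ ≤ α(G). -/
open Finset

section

variable {V : Type*} [Fintype V] [DecidableEq V] (G : SimpleGraph V) [DecidableRel G.Adj]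

theorem card_edgesIn_le_arboricity_mul_card (U : Finset V) :
    (edgesIn G U).card ≤ arboricity G * U.card := by
  by_cases hU : 2 ≤ U.card
  · have hα : ⌈((edgesIn G U).card : ℚ) / ((U.card : ℚ) - 1)⌉₊ ≤ arboricity G := by
      have h := Finset.le_sup (f := fun U : Finset V =>
        if 2 ≤ U.card then ⌈((edgesIn G U).card : ℚ) / ((U.card : ℚ) - 1)⌉₊ else 0)
        (Finset.mem_univ U)
      simp only [if_pos hU] at h
      exact h
    have hU' : (2 : ℚ) ≤ U.card := by exact_mod_cast hU
    have hle := (div_le_iff₀ (by linarith)).1 (Nat.ceil_le.1 hα)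
    have hα₀ : (0 : ℚ) ≤ arboricity G := Nat.cast_nonneg _
    have : ((edgesIn G U).card : ℚ) ≤ arboricity G * U.card := by linarith
    exact_mod_cast this
  · suffices edgesIn G U = ∅ by simp [this]
    refine Finset.eq_empty_of_forall_notMem fun e => ?_
    induction e with
    | h u v =>
      intro he
      simp only [edgesIn, Finset.mem_inter, SimpleGraph.mem_edgeFinset, SimpleGraph.mem_edgeSet,
        Finset.mk_mem_sym2_iff] at he
      exact hU (Finset.one_lt_card.2 ⟨u, he.2.1, v, he.2.2, he.1.ne⟩)

/-- Hall's theorem, applied to the edges of `G` and `arboricity G` copies of each vertex. -/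
theorem exists_injective_endpoint_slot :
    ∃ f : G.edgeSet → V × Fin (arboricity G),
      Function.Injective f ∧ ∀ e : G.edgeSet, (f e).1 ∈ (e : Sym2 V) := by
  obtain ⟨f, hf, hmem⟩ := (Finset.all_card_le_biUnion_card_iff_exists_injective
    fun e : G.edgeSet => (e : Sym2 V).toFinset ×ˢ (univ : Finset (Fin (arboricity G)))).1 (by
      intro s
      set U : Finset V := s.biUnion fun e => (e : Sym2 V).toFinset with hU
      have hunion : (s.biUnion fun e => (e : Sym2 V).toFinset ×ˢ
          (univ : Finset (Fin (arboricity G)))) = U ×ˢ univ := by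
        ext ⟨v, i⟩
        simp [hU]
      have hsub : s.map (Function.Embedding.subtype _) ⊆ edgesIn G U := by
        intro e he
        obtain ⟨e, hes, rfl⟩ := Finset.mem_map.1 he
        refine Finset.mem_inter.2 ⟨SimpleGraph.mem_edgeFinset.2 e.2, Finset.mem_sym2_iff.2 ?_⟩
        exact fun v hv => Finset.mem_biUnion.2 ⟨e, hes, Sym2.mem_toFinset.2 hv⟩
      calc s.card = (s.map (Function.Embedding.subtype _)).card := (Finset.card_map _).symm
        _ ≤ (edgesIn G U).card := Finset.card_le_card hsub
        _ ≤ arboricity G * U.card := card_edgesIn_le_arboricity_mul_card G U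
        _ = _ := by rw [hunion, Finset.card_product, Finset.card_univ, Fintype.card_fin, mul_comm])
  exact ⟨f, hf, fun e => Sym2.mem_toFinset.1 (Finset.mem_product.1 (hmem e)).1⟩

variable {G}

/-- Orient each edge out of a chosen endpoint. -/
def GraphOrientation.ofTail (t : G.edgeSet → V) (ht : ∀ e : G.edgeSet, t e ∈ (e : Sym2 V)) :
    GraphOrientation G where
  dir u v := decide (∃ h : G.Adj u v, t ⟨s(u, v), h⟩ = u)
  dir_iff u v := by
    simp only [decide_eq_true_eq]
    refine ⟨fun h => ?_, ?_⟩
    · refine (Sym2.mem_iff.1 (ht ⟨s(u, v), h⟩)).imp (fun hu => ⟨h, hu⟩) fun hv => ⟨h.symm, ?_⟩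
      simpa only [Sym2.eq_swap] using hv
    · rintro (⟨h, -⟩ | ⟨h, -⟩)
      exacts [h, h.symm]
  asymm u v := by
    simp only [decide_eq_true_eq]
    rintro ⟨h, hu⟩ ⟨h', hv⟩
    refine h.ne (hu.symm.trans ?_)
    simpa only [Sym2.eq_swap] using hv

theorem GraphOrientation.outDeg_ofTail_le {k : ℕ} {f : G.edgeSet → V × Fin k}
    (hf : Function.Injective f) (ht : ∀ e : G.edgeSet, (f e).1 ∈ (e : Sym2 V)) (u : V) :
    (GraphOrientation.ofTail (fun e => (f e).1) ht).outDeg u ≤ k := by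
  have hdir : ∀ v, (GraphOrientation.ofTail (fun e => (f e).1) ht).dir u v →
      ∃ h : G.Adj u v, (f ⟨s(u, v), h⟩).1 = u := fun v hv => of_decide_eq_true hv
  choose hadj htail using hdir
  rw [outDeg, ← Fintype.card_subtype]
  refine (Fintype.card_le_of_injective
    (fun v : {v // (GraphOrientation.ofTail (fun e => (f e).1) ht).dir u v} =>
      (f ⟨s(u, v), hadj v v.2⟩).2) fun v w hvw => ?_).trans_eq (Fintype.card_fin k)
  have h := hf (Prod.ext ((htail v v.2).trans (htail w w.2).symm) hvw)
  exact Subtype.ext (Sym2.congr_right.1 (congrArg Subtype.val h))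

end

/-- Every graph with at least one edge admits an orientation whose
maximum out-degree is at most its arboricity. -/
theorem exists_orientation_max_outDeg_le_arboricity {V : Type*} [Fintype V] [DecidableEq V]
    (G : SimpleGraph V) [DecidableRel G.Adj] (hE : G.edgeSet.Nonempty) :
    ∃ D : GraphOrientation G, D.maxOutDeg ≤ arboricity G := by
  obtain ⟨f, hf, ht⟩ := exists_injective_endpoint_slot G
  exact ⟨GraphOrientation.ofTail (fun e => (f e).1) ht,
    Finset.sup_le fun u _ => GraphOrientation.outDeg_ofTail_le hf ht u⟩
end

section
/- Every finite simple undirected graph G admits an orientation in which every edge is valid, i.e., an orientation such that every edge oriented u→v satisfies d⁺(u) ≤ d⁺(v) + 1. -/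
open Finset

namespace GraphOrientation
variable {V : Type*} [Fintype V] [DecidableEq V] {G : SimpleGraph V}

open Classical in
instance : Nonempty (GraphOrientation G) := by
  let e := Fintype.equivFin V
  refine ⟨⟨fun u v => decide (G.Adj u v ∧ e u < e v), fun u v => ?_, fun u v => ?_⟩⟩
  · simp only [decide_eq_true_eq]
    constructor
    · intro h
      rcases lt_or_gt_of_ne (e.injective.ne h.ne) with hlt | hlt
      · exact Or.inl ⟨h, hlt⟩
      · exact Or.inr ⟨h.symm, hlt⟩
    · rintro (h | h)
      · exact h.1
      · exact h.1.symm
  · simp only [decide_eq_true_eq]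
    exact fun h h' => lt_asymm h.2 h'.2

/-- Reverse the edge oriented `u → v`. -/
def flip (D : GraphOrientation G) (u v : V) (huv : D.dir u v) : GraphOrientation G where
  dir a b := if a = u ∧ b = v then false else if a = v ∧ b = u then true else D.dir a b
  dir_iff a b := by
    have := D.dir_iff a b
    have := D.asymm u v huv
    grind
  asymm a b := by
    have := D.asymm a b
    have := D.asymm u v huv
    grind

variable (D : GraphOrientation G) {u v : V} (huv : D.dir u v)

theorem ne_of_dir (huv : D.dir u v) : u ≠ v := by
  rintro rfl
  exact D.asymm _ _ huv huv

theorem outDeg_flip_tail : (D.flip u v huv).outDeg u + 1 = D.outDeg u := by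
  have hne := D.ne_of_dir huv
  have h : (univ.filter fun w => (D.flip u v huv).dir u w) =
      (univ.filter fun w => D.dir u w).erase v := by
    ext w
    simp only [flip, mem_filter, mem_univ, true_and, mem_erase]
    grind
  rw [outDeg, h, card_erase_add_one (by simpa using huv), outDeg]

theorem outDeg_flip_head : (D.flip u v huv).outDeg v = D.outDeg v + 1 := by
  have hne := D.ne_of_dir huv
  have h : (univ.filter fun w => (D.flip u v huv).dir v w) =
      insert u (univ.filter fun w => D.dir v w) := by
    ext w
    simp only [flip, mem_filter, mem_univ, true_and, mem_insert]
    grind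
  rw [outDeg, h, card_insert_of_notMem (by simpa using D.asymm u v huv), outDeg]

theorem outDeg_flip_of_ne {w : V} (hu : w ≠ u) (hv : w ≠ v) :
    (D.flip u v huv).outDeg w = D.outDeg w := by
  simp [outDeg, flip, hu, hv]

theorem sum_outDeg_sq_flip_lt (h : D.outDeg v + 1 < D.outDeg u) :
    ∑ w, (D.flip u v huv).outDeg w ^ 2 < ∑ w, D.outDeg w ^ 2 := by
  have split (f : V → ℕ) : ∑ w, f w = f u + (f v + ∑ w ∈ (univ.erase u).erase v, f w) := by
    rw [add_sum_erase _ f (by simpa using (D.ne_of_dir huv).symm), add_sum_erase _ f (mem_univ u)]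
  have hrest : ∑ w ∈ (univ.erase u).erase v, (D.flip u v huv).outDeg w ^ 2 =
      ∑ w ∈ (univ.erase u).erase v, D.outDeg w ^ 2 := by
    refine sum_congr rfl fun w hw => ?_
    simp only [mem_erase, mem_univ, and_true] at hw
    rw [D.outDeg_flip_of_ne huv hw.2 hw.1]
  rw [split, split, hrest, D.outDeg_flip_head huv]
  have htail := D.outDeg_flip_tail huv
  rw [← htail] at h ⊢
  nlinarith

end GraphOrientation

/-- Every finite simple graph admits an orientation in which every edge
is valid, i.e. every edge oriented `u → v` satisfies `d⁺(u) ≤ d⁺(v) + 1`. -/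
theorem exists_orientation_all_valid {V : Type*} [Fintype V] [DecidableEq V]
    (G : SimpleGraph V) :
    ∃ D : GraphOrientation G, ∀ u v : V, D.dir u v → D.outDeg u ≤ D.outDeg v + 1 := by
  let cost (D : GraphOrientation G) : ℕ := ∑ w, D.outDeg w ^ 2
  refine ⟨Function.argmin cost, fun u v huv => ?_⟩
  by_contra! h
  exact Function.not_lt_argmin cost _ (GraphOrientation.sum_outDeg_sq_flip_lt _ huv h)
end

section
/- Let D be an orientation of a finite simple graph G in which every edge is valid, let u, v be distinct vertices with {u,v} ∉ E and d⁺_D(u) ≤ d⁺_D(v), and let D' be the orientation of G + {u,v} that agrees with D on E and orients the new edge as u→v. Then the new edge u→v is valid in D', and every edge of G + {u,v} that is violated in D' is oriented out of u. -/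
open Finset

namespace GraphOrientation
variable {V : Type*} [Fintype V] [DecidableEq V] {G : SimpleGraph V} {u v : V}

theorem dir_sup_edge_iff {D : GraphOrientation G}
    {D' : GraphOrientation (G ⊔ SimpleGraph.edge u v)}
    (hagree : ∀ a b : V, G.Adj a b → D'.dir a b = D.dir a b) (hnew : D'.dir u v) (a b : V) :
    D'.dir a b ↔ D.dir a b ∨ a = u ∧ b = v := by
  constructor
  · intro h
    have hadj := (D'.dir_iff a b).2 (Or.inl h)
    rw [SimpleGraph.sup_adj, SimpleGraph.edge_adj] at hadj
    rcases hadj with hG | ⟨⟨rfl, rfl⟩ | ⟨rfl, rfl⟩, -⟩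
    · exact Or.inl (hagree a b hG ▸ h)
    · exact Or.inr ⟨rfl, rfl⟩
    · exact absurd h (D'.asymm _ _ hnew)
  · rintro (h | ⟨rfl, rfl⟩)
    · rw [hagree a b ((D.dir_iff a b).2 (Or.inl h))]
      exact h
    · exact hnew

theorem outDeg_sup_edge_of_ne {D : GraphOrientation G}
    {D' : GraphOrientation (G ⊔ SimpleGraph.edge u v)}
    (hagree : ∀ a b : V, G.Adj a b → D'.dir a b = D.dir a b) (hnew : D'.dir u v)
    {a : V} (ha : a ≠ u) : D'.outDeg a = D.outDeg a := by
  simp [outDeg, dir_sup_edge_iff hagree hnew, ha]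

theorem outDeg_sup_edge_self (hne : ¬ G.Adj u v) {D : GraphOrientation G}
    {D' : GraphOrientation (G ⊔ SimpleGraph.edge u v)}
    (hagree : ∀ a b : V, G.Adj a b → D'.dir a b = D.dir a b) (hnew : D'.dir u v) :
    D'.outDeg u = D.outDeg u + 1 := by
  have hv : v ∉ Finset.univ.filter fun b => D.dir u b := by
    simpa using fun h => hne ((D.dir_iff u v).2 (Or.inl h))
  rw [outDeg, outDeg, ← Finset.card_insert_of_notMem hv]
  congr 1
  ext b
  simp [dir_sup_edge_iff hagree hnew, or_comm]

end GraphOrientation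

/-- Insert a non-edge `{u,v}` (with `d⁺(u) ≤ d⁺(v)`) into a graph all of
whose edges are valid, orienting it `u → v`. Then the new edge `u → v` is valid in the new
orientation `D'`, and every violated edge of `D'` is oriented out of `u`. -/
theorem insert_new_valid_and_violated_out_of_u {V : Type*} [Fintype V] [DecidableEq V]
    (G : SimpleGraph V) (u v : V) (huv : u ≠ v) (hne : ¬ G.Adj u v)
    (D : GraphOrientation G)
    (hvalid : ∀ a b : V, D.dir a b → D.outDeg a ≤ D.outDeg b + 1)
    (hdeg : D.outDeg u ≤ D.outDeg v)
    (D' : GraphOrientation (G ⊔ SimpleGraph.edge u v))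
    (hagree : ∀ a b : V, G.Adj a b → D'.dir a b = D.dir a b)
    (hnew : D'.dir u v) :
    D'.outDeg u ≤ D'.outDeg v + 1 ∧
      ∀ a b : V, D'.dir a b → ¬ D'.outDeg a ≤ D'.outDeg b + 1 → a = u := by
  have hself := GraphOrientation.outDeg_sup_edge_self hne hagree hnew
  have hother {a : V} (ha : a ≠ u) : D'.outDeg a = D.outDeg a :=
    GraphOrientation.outDeg_sup_edge_of_ne hagree hnew ha
  refine ⟨by rw [hself, hother huv.symm]; omega, fun a b hab hviol => ?_⟩
  by_contra ha
  have hD : D.dir a b :=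
    ((GraphOrientation.dir_sup_edge_iff hagree hnew a b).1 hab).resolve_right fun h => ha h.1
  have hle := hvalid a b hD
  rw [hother ha] at hviol
  by_cases hb : b = u
  · subst hb
    omega
  · rw [hother hb] at hviol
    exact hviol hle
end

section
/- Let D be an orientation of a finite simple graph G in which every edge is valid, let {u,v} ∈ E be an edge oriented u→v in D, and let D' be the orientation of G − {u,v} obtained by restricting D. Then every edge of G − {u,v} that is violated in D' is oriented into u. -/
open Finset

namespace GraphOrientation

variable {V : Type*} [Fintype V] [DecidableEq V] {G : SimpleGraph V}

/-- Two orientations (of possibly different graphs) compare in out-degree at `a` as soon as every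
edge out of `a` in the first is also an edge out of `a` in the second. -/
theorem outDeg_le_outDeg {H : SimpleGraph V} {D : GraphOrientation G} {D' : GraphOrientation H}
    {a : V} (h : ∀ b, D.dir a b → D'.dir a b) : D.outDeg a ≤ D'.outDeg a :=
  Finset.card_le_card (Finset.monotone_filter_right _ fun b _ => h b)

theorem adj_of_dir (D : GraphOrientation G) {a b : V} (h : D.dir a b) : G.Adj a b :=
  (D.dir_iff a b).2 (Or.inl h)

end GraphOrientation

/-- Delete an edge `{u,v}` oriented `u → v` from a graph all of whose
edges are valid, restricting the orientation. Then every edge violated in the restricted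
orientation `D'` is oriented into `u`. -/
theorem delete_violated_into_u {V : Type*} [Fintype V] [DecidableEq V]
    (G : SimpleGraph V) (u v : V) (hadj : G.Adj u v)
    (D : GraphOrientation G)
    (hvalid : ∀ a b : V, D.dir a b → D.outDeg a ≤ D.outDeg b + 1)
    (hdir : D.dir u v)
    (D' : GraphOrientation (G.deleteEdges {s(u, v)}))
    (hagree : ∀ a b : V, (G.deleteEdges {s(u, v)}).Adj a b → D'.dir a b = D.dir a b) :
    ∀ a b : V, D'.dir a b → ¬ D'.outDeg a ≤ D'.outDeg b + 1 → b = u := by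
  intro a b hab hviol
  by_contra hbu
  have restrict : ∀ x y, D'.dir x y → D.dir x y := fun x y h =>
    hagree x y (D'.adj_of_dir h) ▸ h
  have extend : ∀ y, D.dir b y → D'.dir b y := by
    intro y h
    have hne : s(b, y) ≠ s(u, v) := by
      intro he
      rcases Sym2.eq_iff.1 he with ⟨hb, -⟩ | ⟨rfl, rfl⟩
      · exact hbu hb
      · exact D.asymm _ _ h hdir
    have hadj' : (G.deleteEdges {s(u, v)}).Adj b y :=
      SimpleGraph.deleteEdges_adj.2 ⟨D.adj_of_dir h, hne⟩
    exact (hagree b y hadj').symm ▸ h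
  have ha := GraphOrientation.outDeg_le_outDeg (restrict a)
  have hb := GraphOrientation.outDeg_le_outDeg extend
  have := hvalid a b (restrict a b hab)
  omega
end

section
/- Let D be an orientation of a finite simple graph G in which every edge is valid, let {u,v} ∈ E be an edge oriented u→v in D, let D' be the orientation of G − {u,v} obtained by restricting D, and suppose some edge {v',u}, oriented v'→u in D', is violated in D'. Let D'' be the orientation of G − {u,v} that agrees with D' on all edges except that the edge {v',u} is reoriented as u→v'. Then in D'': the edge u→v' is valid, d⁺_{D''}(u) = d⁺_D(u), d⁺_{D''}(v') = d⁺_{D''}(u), and every violated edge of D'' is oriented into v'. -/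
open Finset

namespace GraphOrientation
variable {V : Type*} [Fintype V] [DecidableEq V] {G : SimpleGraph V}

/-- The arcs of the restriction of `D` to `G - {u,v}`, where `D` orients `u → v`. -/
theorem dir_restrict_iff {u v : V} {D : GraphOrientation G} (huv : D.dir u v)
    {D' : GraphOrientation (G.deleteEdges {s(u, v)})}
    (hagree : ∀ a b : V, (G.deleteEdges {s(u, v)}).Adj a b → D'.dir a b = D.dir a b)
    (a b : V) : D'.dir a b ↔ D.dir a b ∧ ¬ (a = u ∧ b = v) := by
  have hadj : (G.deleteEdges {s(u, v)}).Adj a b ↔ G.Adj a b ∧ s(a, b) ≠ s(u, v) := by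
    simp [SimpleGraph.deleteEdges_adj]
  constructor
  · intro h
    have hab := (D'.dir_iff a b).2 (Or.inl h)
    refine ⟨hagree a b hab ▸ h, ?_⟩
    rintro ⟨rfl, rfl⟩
    exact (hadj.1 hab).2 rfl
  · rintro ⟨h, hne⟩
    have hab : (G.deleteEdges {s(u, v)}).Adj a b := by
      refine hadj.2 ⟨(D.dir_iff a b).2 (Or.inl h), fun he => ?_⟩
      rcases Sym2.eq_iff.1 he with he | ⟨rfl, rfl⟩
      · exact hne he
      · exact D.asymm _ _ huv h
    exact (hagree a b hab).symm ▸ h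

/-- The arcs of the orientation obtained from `D` by reversing an arc to `u → w`. -/
theorem dir_flip_iff {u w : V} {D D' : GraphOrientation G} (huw : D'.dir u w)
    (hagree : ∀ a b : V, G.Adj a b → s(a, b) ≠ s(u, w) → D'.dir a b = D.dir a b)
    (a b : V) : D'.dir a b ↔ (a = u ∧ b = w) ∨ (D.dir a b ∧ s(a, b) ≠ s(u, w)) := by
  by_cases he : s(a, b) = s(u, w)
  · rcases Sym2.eq_iff.1 he with ⟨rfl, rfl⟩ | ⟨rfl, rfl⟩
    · simp [huw]
    · have hne : a ≠ b := fun h => D'.asymm _ _ huw (by simpa [h] using huw)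
      simp [D'.asymm _ _ huw, hne]
  · have hne : ¬ (a = u ∧ b = w) := fun h => he (by rw [h.1, h.2])
    simp only [hne, false_or, ne_eq, he, not_false_eq_true, and_true]
    constructor
    · intro h
      exact hagree a b ((D'.dir_iff a b).2 (Or.inl h)) he ▸ h
    · intro h
      exact (hagree a b ((D.dir_iff a b).2 (Or.inl h)) he).symm ▸ h

/-- The out-degree depends only on the set of out-neighbours. -/
theorem outDeg_congr {H : SimpleGraph V} {D : GraphOrientation G} {D' : GraphOrientation H}
    {a : V} (h : ∀ b, D.dir a b ↔ D'.dir a b) : D.outDeg a = D'.outDeg a := by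
  simp only [outDeg, h]

/-- Removing one out-neighbour lowers the out-degree by one. -/
theorem outDeg_add_one_eq {H : SimpleGraph V} {D : GraphOrientation G}
    {D' : GraphOrientation H} {a c : V} (hc : D.dir a c)
    (h : ∀ b, D'.dir a b ↔ D.dir a b ∧ b ≠ c) : D'.outDeg a + 1 = D.outDeg a := by
  have hset : (univ.filter fun b => D'.dir a b) = (univ.filter fun b => D.dir a b).erase c := by
    ext b
    simp [h, and_comm]
  rw [outDeg, outDeg, hset]
  exact card_erase_add_one (by simpa using hc)

end GraphOrientation

/-- Delete an edge `{u,v}` oriented `u → v` from a graph all of whose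
edges are valid, restricting the orientation to `D'`; suppose the edge `{v',u}`, oriented
`v' → u`, is violated in `D'`. Let `D''` agree with `D'` except that `{v',u}` is
reoriented as `u → v'`. Then in `D''`: the edge `u → v'` is valid,
`d⁺_{D''}(u) = d⁺_D(u)`, `d⁺_{D''}(v') = d⁺_{D''}(u)`, and every violated edge of `D''`
is oriented into `v'`. -/
theorem delete_flip_valid {V : Type*} [Fintype V] [DecidableEq V]
    (G : SimpleGraph V) (u v : V) (hadj : G.Adj u v)
    (D : GraphOrientation G)
    (hvalid : ∀ a b : V, D.dir a b → D.outDeg a ≤ D.outDeg b + 1)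
    (hdir : D.dir u v)
    (D' : GraphOrientation (G.deleteEdges {s(u, v)}))
    (hagree : ∀ a b : V, (G.deleteEdges {s(u, v)}).Adj a b → D'.dir a b = D.dir a b)
    (v' : V) (hdir' : D'.dir v' u)
    (hviol : ¬ D'.outDeg v' ≤ D'.outDeg u + 1)
    (D'' : GraphOrientation (G.deleteEdges {s(u, v)}))
    (hflip : D''.dir u v')
    (hagree'' : ∀ a b : V, (G.deleteEdges {s(u, v)}).Adj a b → s(a, b) ≠ s(u, v') →
      D''.dir a b = D'.dir a b) :
    D''.outDeg u ≤ D''.outDeg v' + 1 ∧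
      D''.outDeg u = D.outDeg u ∧
      D''.outDeg v' = D''.outDeg u ∧
      ∀ a b : V, D''.dir a b → ¬ D''.outDeg a ≤ D''.outDeg b + 1 → b = v' := by
  have hD' := GraphOrientation.dir_restrict_iff hdir hagree
  have hD'' := GraphOrientation.dir_flip_iff hflip hagree''
  have hv'u : D.dir v' u := ((hD' v' u).1 hdir').1
  have hne : v' ≠ u := fun h => D'.asymm _ _ hdir' (by simpa [h] using hdir')
  have hnot : ¬ D'.dir u v' := D'.asymm _ _ hdir'
  have degD'_u : D'.outDeg u + 1 = D.outDeg u :=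
    GraphOrientation.outDeg_add_one_eq hdir fun b => by simp [hD']
  have degD'_of_ne : ∀ a, a ≠ u → D'.outDeg a = D.outDeg a := fun a ha =>
    GraphOrientation.outDeg_congr fun b => by simp [hD', ha]
  have degD''_u : D'.outDeg u + 1 = D''.outDeg u :=
    GraphOrientation.outDeg_add_one_eq hflip fun b => by
      rw [hD'']
      by_cases hb : b = v'
      · simp [hb, hnot]
      · simp [hb, hne.symm]
  have degD''_v' : D''.outDeg v' + 1 = D'.outDeg v' :=
    GraphOrientation.outDeg_add_one_eq hdir' fun b => by
      rw [hD'']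
      simp [hne]
  have degD''_of_ne : ∀ a, a ≠ u → a ≠ v' → D''.outDeg a = D'.outDeg a := fun a hau hav =>
    GraphOrientation.outDeg_congr fun b => by
      rw [hD'']
      simp [hau, hav]
  have hv'_le := hvalid v' u hv'u
  have hv'_eq := degD'_of_ne v' hne
  refine ⟨by omega, by omega, by omega, fun a b hab hviol_ab => ?_⟩
  by_contra hb
  apply hviol_ab
  have hDab : D.dir a b := by
    rcases (hD'' a b).1 hab with h | h
    · exact absurd h.2 hb
    · exact ((hD' a b).1 h.1).1
  have hle := hvalid a b hDab
  have ha_le : D''.outDeg a ≤ D.outDeg a := by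
    by_cases hau : a = u
    · subst hau; omega
    by_cases hav : a = v'
    · subst hav; omega
    rw [degD''_of_ne a hau hav, degD'_of_ne a hau]
  have hb_eq : D''.outDeg b = D.outDeg b := by
    by_cases hbu : b = u
    · subst hbu; omega
    rw [degD''_of_ne b hbu hb, degD'_of_ne b hbu]
  omega
end
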